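/- Let ω be a measurement function and V a finite-step control Lyapunov function for time step M. For N ∈ ℕ*, let V_N(ξ) denote the optimal value of the horizon-N problem: V_N(ξ) = min over admissible control sequences u_N ∈ U^N (satisfying u_j ∈ U and g(x(j),u_j) ∈ X for j = 0,…,N−1) of Σ_{i=0}^{N−1} V(x(i,ξ,u_N)), and let the MPC closed loop be x⁺ = g(x, u₀*(x)) where u₀*(x) is the first element of an optimal sequence. Assume there exists a class-K∞ function σ such that V_N(ξ) ≤ σ(V(ξ)) for all ξ ∈ X and all N ∈ ℕ*. Then the MPC scheme is semiglobally practically asymptotically ω-stabilizing in A := ω⁻¹(0) with respect to the optimization horizon N: there exists a class-KL function β such that for each δ > 0 and Δ > δ there is N_{δ,Δ} ∈ ℕ* such that for all N ≥ N_{δ,Δ} and all ξ with ω(ξ) < Δ, the MPC closed-loop solutions satisfy ω(x_{MPC(N)}(t,ξ)) ≤ max{β(ω(ξ), t), δ} for all t ∈ ℕ. If moreover σ is linear, σ(r) = γr with γ > 1, then the MPC closed loop is asymptotically ω-stable in A for all N > 2 + ln(γ−1)/(ln γ − ln(γ−1)). -/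

import Mathlib

open Filter Finset NNReal

noncomputable section

/-- A class-K function on `[0,∞)`: continuous, strictly increasing, zero at zero. -/
def ClassK (κ : ℝ≥0 → ℝ≥0) : Prop :=
  Continuous κ ∧ StrictMono κ ∧ κ 0 = 0

/-- A class-K∞ function: class K and unbounded. -/
def ClassKInf (κ : ℝ≥0 → ℝ≥0) : Prop :=
  ClassK κ ∧ Filter.Tendsto κ Filter.atTop Filter.atTop

/-- A class-KL function. -/
def ClassKL (β : ℝ≥0 → ℝ≥0 → ℝ≥0) : Prop :=
  Continuous (fun p : ℝ≥0 × ℝ≥0 => β p.1 p.2) ∧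
  (∀ s : ℝ≥0, ClassK fun r => β r s) ∧
  (∀ r : ℝ≥0, Antitone (fun s => β r s) ∧
    Filter.Tendsto (fun s => β r s) Filter.atTop (nhds 0))

/-- The iterates `g^j(ξ, u)` of the control system `x⁺ = g(x,u)` under the
control sequence `u` starting from `ξ`. -/
def iter {n m : ℕ} (g : (Fin n → ℝ) → (Fin m → ℝ) → (Fin n → ℝ)) (ξ : Fin n → ℝ)
    (u : ℕ → Fin m → ℝ) : ℕ → Fin n → ℝ
  | 0 => ξ
  | j + 1 => g (iter g ξ u j) (u j)

/-- `q : X → U^M` is an admissible finite-step feedback control law (afcl) of length `M`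
for the system `g` with state constraint set `X`, input constraint set `U` and
measurement function `ω`. -/
def IsAfcl {n m : ℕ} (ω : (Fin n → ℝ) → ℝ≥0) (X : Set (Fin n → ℝ)) (U : Set (Fin m → ℝ))
    (g : (Fin n → ℝ) → (Fin m → ℝ) → (Fin n → ℝ)) (M : ℕ)
    (q : (Fin n → ℝ) → ℕ → Fin m → ℝ) : Prop :=
  (∀ ξ ∈ X, ∀ j < M, q ξ j ∈ U) ∧
  (∀ ξ ∈ X, ∀ j : ℕ, 1 ≤ j → j ≤ M → iter g ξ (q ξ) j ∈ X) ∧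
  (∀ j : ℕ, 1 ≤ j → j ≤ M → ∃ κ : ℝ≥0 → ℝ≥0, ClassK κ ∧
    ∀ ξ ∈ X, ω (iter g ξ (q ξ) j) ≤ κ (ω ξ))

/-- States of the closed loop under the `M`-step feedback `q` at time instants `kM`. -/
def loopBase {n m : ℕ} (g : (Fin n → ℝ) → (Fin m → ℝ) → (Fin n → ℝ)) (M : ℕ)
    (q : (Fin n → ℝ) → ℕ → Fin m → ℝ) (ξ : Fin n → ℝ) : ℕ → Fin n → ℝ
  | 0 => ξ
  | k + 1 => iter g (loopBase g M q ξ k) (q (loopBase g M q ξ k)) M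

/-- The closed-loop trajectory `x_q(t, ξ)`: for `t = kM + j`, `j ∈ {0,…,M-1}`,
`x_q(kM + j) = g^j(x_q(kM), q(x_q(kM)))`. -/
def closedLoop {n m : ℕ} (g : (Fin n → ℝ) → (Fin m → ℝ) → (Fin n → ℝ)) (M : ℕ)
    (q : (Fin n → ℝ) → ℕ → Fin m → ℝ) (ξ : Fin n → ℝ) (t : ℕ) : Fin n → ℝ :=
  iter g (loopBase g M q ξ (t / M)) (q (loopBase g M q ξ (t / M))) (t % M)

/-- A control sequence `u` of length `N` is admissible from `ξ`: all applied inputs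
lie in `U` and the resulting states remain in `X`. -/
def Adm {n m : ℕ} (X : Set (Fin n → ℝ)) (U : Set (Fin m → ℝ))
    (g : (Fin n → ℝ) → (Fin m → ℝ) → (Fin n → ℝ)) (ξ : Fin n → ℝ) (N : ℕ)
    (u : ℕ → Fin m → ℝ) : Prop :=
  ∀ j < N, u j ∈ U ∧ iter g ξ u (j + 1) ∈ X

/-- The MPC cost functional `Σ_{i=0}^{N-1} V(x(i,ξ,u))`. -/
def cost {n m : ℕ} (V : (Fin n → ℝ) → ℝ≥0)
    (g : (Fin n → ℝ) → (Fin m → ℝ) → (Fin n → ℝ)) (N : ℕ) (ξ : Fin n → ℝ)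
    (u : ℕ → Fin m → ℝ) : ℝ≥0 :=
  ∑ i ∈ Finset.range N, V (iter g ξ u i)

/-- `uopt` is a selection of optimal control sequences for the horizon-`N`
optimal control problem with running cost `V`. -/
def IsOptSel {n m : ℕ} (X : Set (Fin n → ℝ)) (U : Set (Fin m → ℝ))
    (g : (Fin n → ℝ) → (Fin m → ℝ) → (Fin n → ℝ)) (V : (Fin n → ℝ) → ℝ≥0) (N : ℕ)
    (uopt : (Fin n → ℝ) → ℕ → Fin m → ℝ) : Prop :=
  ∀ ξ ∈ X, Adm X U g ξ N (uopt ξ) ∧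
    ∀ u : ℕ → Fin m → ℝ, Adm X U g ξ N u → cost V g N ξ (uopt ξ) ≤ cost V g N ξ u

/-- The MPC closed loop: at every time step apply the first element of the
(selected) optimal control sequence. -/
def mpcLoop {n m : ℕ} (g : (Fin n → ℝ) → (Fin m → ℝ) → (Fin n → ℝ))
    (uopt : (Fin n → ℝ) → ℕ → Fin m → ℝ) (ξ : Fin n → ℝ) : ℕ → Fin n → ℝ
  | 0 => ξ
  | t + 1 => g (mpcLoop g uopt ξ t) (uopt (mpcLoop g uopt ξ t) 0)

/-!
Along the closed loop the optimal value `V_N` serves as a Lyapunov function. Let `ξ` be a state and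
let `l 0, l 1, …` be the values of `V` along the tail of the optimal sequence from `ξ`. Following
that tail for `p` steps and then an optimal sequence of horizon `N - p` is admissible, so
`V_N(ξ⁺) ≤ ∑ i < p, l i + σ (l p)` for every `p < N`, whereas `V_N(ξ) = V ξ + ∑ i < N - 1, l i`.

* If `V_N(ξ) ≤ L` and `N` is large, some `l p` is so small that `σ (l p) ≤ ε`, whence
  `V_N(ξ⁺) + V ξ ≤ V_N(ξ) + ε`. As long as `V ≥ 2 ε`, half of `V` absorbs the error, so the first
  `t + 1` values of `V` along the closed loop sum to at most `2 V_N(ξ)`. One of them is at most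
  `2 V_N(ξ) / (t + 1)`, and `V_N`, being decreasing and bounded by `σ ∘ V`, is at most
  `σ (2 V_N(ξ) / (t + 1))` at time `t`.
* If `σ r = γ r`, combining all `p < N - 1` gives `V_N(ξ⁺) ≤ θ V_N(ξ)` with
  `θ = ρ / (1 - ρ ^ (N - 1))` and `ρ = 1 - 1 / γ`; the bound on `N` says exactly that `θ < 1`.
-/

namespace ClassK

variable {κ κ' : ℝ≥0 → ℝ≥0}

theorem comp (hκ : ClassK κ) (hκ' : ClassK κ') : ClassK (κ ∘ κ') :=
  ⟨hκ.1.comp hκ'.1, hκ.2.1.comp hκ'.2.1, by simp only [Function.comp_apply, hκ'.2.2, hκ.2.2]⟩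

theorem const_mul (hκ : ClassK κ) {c : ℝ≥0} (hc : 0 < c) : ClassK fun r => c * κ r :=
  ⟨continuous_const.mul hκ.1, fun _ _ hxy => mul_lt_mul_of_pos_left (hκ.2.1 hxy) hc,
    by simp only [hκ.2.2, mul_zero]⟩

theorem pos (hκ : ClassK κ) {r : ℝ≥0} (hr : 0 < r) : 0 < κ r :=
  hκ.2.2 ▸ hκ.2.1 hr

theorem exists_pos_le (hκ : ClassK κ) {ε : ℝ≥0} (hε : 0 < ε) : ∃ c, 0 < c ∧ κ c ≤ ε := by
  have hsmall : ∀ᶠ c in nhds 0, κ c < ε :=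
    hκ.1.continuousAt.eventually_lt_const (hκ.2.2.symm ▸ hε)
  obtain ⟨c, hc, hc0⟩ :=
    ((hsmall.filter_mono nhdsWithin_le_nhds).and (self_mem_nhdsWithin (s := Set.Ioi 0))).exists
  exact ⟨c, hc0, hc.le⟩

theorem classKL_comp_mul (hκ : ClassK κ) (hκ' : ClassK κ') {d : ℝ≥0 → ℝ≥0} (hcont : Continuous d)
    (hanti : Antitone d) (hpos : ∀ s, 0 < d s) (hlim : Tendsto d atTop (nhds 0)) :
    ClassKL fun r s => κ (κ' r * d s) := by
  obtain ⟨hκc, hκm, hκ0⟩ := hκ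
  obtain ⟨hκc', hκm', hκ0'⟩ := hκ'
  refine ⟨by fun_prop, fun s => ⟨by fun_prop, ?_, by simp only [hκ0', zero_mul, hκ0]⟩,
    fun r => ⟨fun _ _ hst => hκm.monotone (mul_le_mul_right (hanti hst) _), ?_⟩⟩
  · exact fun _ _ hxy => hκm (mul_lt_mul_of_pos_right (hκm' hxy) (hpos s))
  · have hprod : Tendsto (fun s => κ' r * d s) atTop (nhds 0) := by
      simpa only [mul_zero] using hlim.const_mul (κ' r)
    have hlim' := (hκc.tendsto 0).comp hprod
    rwa [hκ0] at hlim'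

theorem classKL_comp_mul_inv_add_one (hκ : ClassK κ) (hκ' : ClassK κ') :
    ClassKL fun r s => κ (κ' r * (s + 1)⁻¹) := by
  refine hκ.classKL_comp_mul hκ' ?_ ?_ (fun s => by positivity) ?_
  · exact Continuous.inv₀ (by fun_prop) fun s => by positivity
  · intro s t hst
    dsimp only
    gcongr
  · rw [← NNReal.tendsto_coe]
    simpa [Function.comp_def] using tendsto_inv_atTop_zero.comp
      (tendsto_atTop_add_const_right _ (1 : ℝ) (NNReal.tendsto_coe_atTop.2 tendsto_id))

theorem classKL_comp_mul_rpow (hκ : ClassK κ) (hκ' : ClassK κ') {θ : ℝ≥0} (hθ0 : 0 < θ)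
    (hθ1 : θ < 1) : ClassKL fun r s => κ (κ' r * θ ^ (s : ℝ)) := by
  refine hκ.classKL_comp_mul hκ' ?_ ?_ (fun s => NNReal.rpow_pos hθ0) ?_
  · exact continuous_iff_continuousAt.2 fun s =>
      tendsto_const_nhds.nnrpow NNReal.continuous_coe.continuousAt (Or.inl hθ0.ne')
  · exact fun s t hst => NNReal.rpow_le_rpow_of_exponent_ge hθ0 hθ1.le hst
  · rw [← NNReal.tendsto_coe]
    simp only [NNReal.coe_rpow]
    exact (tendsto_rpow_atTop_of_base_lt_one (θ : ℝ) (neg_one_lt_zero.trans hθ0) hθ1).comp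
      (NNReal.tendsto_coe_atTop.2 tendsto_id)

end ClassK

theorem classK_orderIso (e : ℝ≥0 ≃o ℝ≥0) : ClassK e :=
  ⟨e.continuous, e.strictMono, e.map_bot⟩

theorem ClassKInf.exists_orderIso {κ : ℝ≥0 → ℝ≥0} (hκ : ClassKInf κ) :
    ∃ e : ℝ≥0 ≃o ℝ≥0, ⇑e = κ := by
  obtain ⟨⟨hcont, hmono, hzero⟩, hlim⟩ := hκ
  have hsurj : Function.Surjective κ := fun y =>
    mem_range_of_exists_le_of_exists_ge hcont ⟨0, hzero.trans_le zero_le⟩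
      (hlim.eventually_ge_atTop y).exists
  exact ⟨hmono.orderIsoOfSurjective κ hsurj, rfl⟩

section PracticalDecay

variable {σ : ℝ≥0 → ℝ≥0} {W v : ℕ → ℝ≥0} {ε : ℝ≥0}

theorem le_of_practical_decrease (hσ : Monotone σ) {w w' r c : ℝ≥0} (hstep : w' + r ≤ w + ε)
    (hw : w ≤ σ r) (hwc : w ≤ c) (hc : σ ε + ε ≤ c) : w' ≤ c := by
  rcases le_total ε r with hr | hr
  · exact (le_of_add_le_add_right ((add_le_add_right hr w').trans hstep)).trans hwc
  · calc w' ≤ w + ε := le_self_add.trans hstep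
      _ ≤ σ ε + ε := by gcongr; exact hw.trans (hσ hr)
      _ ≤ c := hc

theorem le_apply_two_mul_div_of_decrease (hσ : Monotone σ) {t : ℕ}
    (hstep : ∀ s < t, 2 * W (s + 1) + v s ≤ 2 * W s) (hvW : v t ≤ W t)
    (hWv : ∀ s ≤ t, W s ≤ σ (v s)) : W t ≤ σ (2 * W 0 / (t + 1)) := by
  have hanti : ∀ s ≤ t, W t ≤ W s := fun s hs => by
    induction hs using Nat.decreasingInduction with
    | self => exact le_rfl
    | of_succ s hs ih =>
      exact ih.trans (le_of_mul_le_mul_left (le_self_add.trans (hstep s hs)) two_pos)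
  have hsum : ∀ s ≤ t, 2 * W s + ∑ i ∈ range s, v i ≤ 2 * W 0 := by
    intro s hs
    induction s with
    | zero => simp
    | succ s ih =>
      rw [sum_range_succ_comm, ← add_assoc]
      exact (add_le_add_left (hstep s hs) _).trans (ih (Nat.le_of_succ_le hs))
  have htotal : ∑ i ∈ range (t + 1), v i ≤ 2 * W 0 := by
    rw [sum_range_succ_comm]
    refine le_trans ?_ (hsum t le_rfl)
    gcongr
    exact hvW.trans (le_mul_of_one_le_left' one_le_two)
  obtain ⟨s, hs, hvs⟩ : ∃ s ∈ range (t + 1), v s ≤ 2 * W 0 / (t + 1) := by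
    refine exists_le_of_sum_le nonempty_range_add_one ?_
    rwa [sum_const, card_range, nsmul_eq_mul, Nat.cast_add_one, mul_div_cancel₀ _ (by positivity)]
  have hst : s ≤ t := Nat.lt_succ_iff.1 (mem_range.1 hs)
  exact (hanti s hst).trans ((hWv s hst).trans (hσ hvs))

theorem le_max_of_practical_decrease (hσ : Monotone σ) {L : ℝ≥0} (hεL : σ (2 * ε) + ε ≤ L)
    (hL : W 0 ≤ L) (hvW : ∀ t, v t ≤ W t) (hWv : ∀ t, W t ≤ σ (v t))
    (hstep : ∀ t, W t ≤ L → W (t + 1) + v t ≤ W t + ε) (t : ℕ) :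
    W t ≤ max (σ (2 * W 0 / (t + 1))) (σ (2 * ε) + ε) := by
  have hε : σ ε + ε ≤ σ (2 * ε) + ε := by
    gcongr
    exact hσ (le_mul_of_one_le_left' one_le_two)
  have hWL : ∀ s, W s ≤ L := fun s => by
    induction s with
    | zero => exact hL
    | succ s ih => exact le_of_practical_decrease hσ (hstep s ih) (hWv s) ih (hε.trans hεL)
  rw [le_max_iff, or_iff_not_imp_right, not_le]
  intro hlarge
  have hlarge' : ∀ s ≤ t, σ (2 * ε) + ε < W s := fun s hs => by
    induction hs using Nat.decreasingInduction with
    | self => exact hlarge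
    | of_succ s _ ih =>
      contrapose! ih
      exact le_of_practical_decrease hσ (hstep s (hWL s)) (hWv s) ih hε
  have hv : ∀ s ≤ t, 2 * ε ≤ v s := fun s hs => by
    by_contra! hvs
    exact (hlarge' s hs).not_ge ((hWv s).trans ((hσ hvs.le).trans le_self_add))
  refine le_apply_two_mul_div_of_decrease hσ (fun s hs => ?_) (hvW t) fun s _ => hWv s
  have hdec := hstep s (hWL s)
  have hvs := hv s hs.le
  rw [← NNReal.coe_le_coe] at hdec hvs ⊢
  push_cast at hdec hvs ⊢
  linarith

end PracticalDecay

section LinearBound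

variable {γ ν : ℝ} {l : ℕ → ℝ} {k : ℕ}

theorem one_sub_inv_pow_lt_inv (hγ : 1 < γ)
    (hk : 2 + Real.log (γ - 1) / (Real.log γ - Real.log (γ - 1)) < k + 1) :
    (1 - γ⁻¹) ^ k < γ⁻¹ := by
  have hγ0 : 0 < γ := one_pos.trans hγ
  have hγ1 : 0 < γ - 1 := sub_pos.2 hγ
  have hlog : 0 < Real.log γ - Real.log (γ - 1) :=
    sub_pos.2 (Real.log_lt_log hγ1 (sub_one_lt γ))
  have hbound : Real.log (γ - 1) < (k - 1) * (Real.log γ - Real.log (γ - 1)) :=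
    (div_lt_iff₀ hlog).1 (by linarith)
  have hρ : 1 - γ⁻¹ = (γ - 1) / γ := by field_simp
  rw [hρ, ← Real.log_lt_log_iff (by positivity) (by positivity), Real.log_pow, Real.log_inv,
    Real.log_div hγ1.ne' hγ0.ne']
  linarith

theorem sub_sum_le_pow_mul (hγ : 1 ≤ γ)
    (hν : ∀ p < k, ν ≤ ∑ i ∈ range p, l i + γ * l p) :
    ν - ∑ i ∈ range k, l i ≤ (1 - γ⁻¹) ^ k * ν := by
  have hcontr : ∀ p < k, ν - ∑ i ∈ range (p + 1), l i ≤
      (1 - γ⁻¹) * (ν - ∑ i ∈ range p, l i) := fun p hp => by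
    have hlp : γ⁻¹ * (ν - ∑ i ∈ range p, l i) ≤ l p :=
      (inv_mul_le_iff₀ (one_pos.trans_le hγ)).2 (by linarith [hν p hp])
    rw [sum_range_succ]
    linarith
  simpa using le_geom (u := fun p => ν - ∑ i ∈ range p, l i)
    (sub_nonneg.2 (inv_le_one_of_one_le₀ hγ)) k hcontr

theorem le_div_mul_of_forall_le_sum_add (hγ : 1 ≤ γ) (hk : (1 - γ⁻¹) ^ k < 1)
    (hν : ∀ p < k, ν ≤ ∑ i ∈ range p, l i + γ * l p) {r : ℝ}
    (hr : r + ∑ i ∈ range k, l i ≤ γ * r) :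
    ν ≤ (1 - γ⁻¹) / (1 - (1 - γ⁻¹) ^ k) * (r + ∑ i ∈ range k, l i) := by
  have htail : γ⁻¹ * (r + ∑ i ∈ range k, l i) ≤ r :=
    (inv_mul_le_iff₀ (one_pos.trans_le hγ)).2 hr
  rw [div_mul_eq_mul_div, le_div_iff₀ (sub_pos.2 hk)]
  linarith [sub_sum_le_pow_mul hγ hν]

end LinearBound

section Concatenation

variable {n m : ℕ} {X : Set (Fin n → ℝ)} {U : Set (Fin m → ℝ)}
  {g : (Fin n → ℝ) → (Fin m → ℝ) → (Fin n → ℝ)} {V : (Fin n → ℝ) → ℝ≥0}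
  {ξ : Fin n → ℝ} {u w : ℕ → Fin m → ℝ} {k p r : ℕ}

theorem iter_add (g : (Fin n → ℝ) → (Fin m → ℝ) → (Fin n → ℝ)) (ξ : Fin n → ℝ)
    (u : ℕ → Fin m → ℝ) (a b : ℕ) :
    iter g ξ u (a + b) = iter g (iter g ξ u a) (fun i => u (a + i)) b := by
  induction b with
  | zero => rfl
  | succ b ih => rw [← add_assoc, iter, iter, ih]

theorem iter_succ_left (g : (Fin n → ℝ) → (Fin m → ℝ) → (Fin n → ℝ)) (ξ : Fin n → ℝ)
    (u : ℕ → Fin m → ℝ) (j : ℕ) :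
    iter g ξ u (j + 1) = iter g (g ξ (u 0)) (u ∘ Nat.succ) j := by
  induction j with
  | zero => rfl
  | succ j ih => rw [iter, ih]; rfl

theorem iter_congr (h : ∀ i < k, u i = w i) : iter g ξ u k = iter g ξ w k := by
  induction k with
  | zero => rfl
  | succ k ih =>
    rw [iter, iter, ih fun i hi => h i (hi.trans k.lt_succ_self), h k k.lt_succ_self]

/-- The concatenation of control sequences: the first `p` elements of `u`, followed by `w`
from its beginning. -/
def concatControl {α : Type*} (p : ℕ) (u w : ℕ → α) : ℕ → α :=
  fun i => if i < p then u i else w (i - p)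

theorem concatControl_of_lt {α : Type*} {u w : ℕ → α} {i p : ℕ} (hi : i < p) :
    concatControl p u w i = u i :=
  if_pos hi

theorem concatControl_add {α : Type*} (p : ℕ) (u w : ℕ → α) (i : ℕ) :
    concatControl p u w (p + i) = w i := by
  simp [concatControl]

theorem iter_concatControl_of_le (hk : k ≤ p) :
    iter g ξ (concatControl p u w) k = iter g ξ u k :=
  iter_congr fun _ hi => concatControl_of_lt (hi.trans_le hk)

theorem iter_concatControl_add :
    iter g ξ (concatControl p u w) (p + k) = iter g (iter g ξ u p) w k := by
  simp only [iter_add, iter_concatControl_of_le le_rfl, concatControl_add]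

theorem Adm.concatControl (hu : Adm X U g ξ p u) (hw : Adm X U g (iter g ξ u p) r w) :
    Adm X U g ξ (p + r) (concatControl p u w) := by
  intro j hj
  rcases lt_or_ge j p with hjp | hpj
  · rw [concatControl_of_lt hjp, iter_concatControl_of_le hjp]
    exact hu j hjp
  · obtain ⟨i, rfl⟩ := Nat.exists_eq_add_of_le hpj
    rw [concatControl_add, add_assoc, iter_concatControl_add]
    exact hw i (Nat.lt_of_add_lt_add_left hj)

theorem Adm.mono (hu : Adm X U g ξ k u) (hpk : p ≤ k) : Adm X U g ξ p u :=
  fun j hj => hu j (hj.trans_le hpk)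

theorem Adm.tail (hu : Adm X U g ξ (k + 1) u) : Adm X U g (g ξ (u 0)) k (u ∘ Nat.succ) :=
  fun j hj => ⟨(hu (j + 1) (Nat.succ_lt_succ hj)).1,
    iter_succ_left g ξ u (j + 1) ▸ (hu (j + 1) (Nat.succ_lt_succ hj)).2⟩

theorem Adm.iter_mem (hu : Adm X U g ξ k u) (hξ : ξ ∈ X) : iter g ξ u k ∈ X := by
  cases k with
  | zero => exact hξ
  | succ k => exact (hu k k.lt_succ_self).2

theorem cost_concatControl :
    cost V g (p + r) ξ (concatControl p u w) = cost V g p ξ u + cost V g r (iter g ξ u p) w := by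
  unfold cost
  rw [sum_range_add]
  congr 1
  · exact sum_congr rfl fun i hi => by rw [iter_concatControl_of_le (mem_range.1 hi).le]
  · exact sum_congr rfl fun i _ => by rw [iter_concatControl_add]

theorem cost_succ_left (V : (Fin n → ℝ) → ℝ≥0) (g : (Fin n → ℝ) → (Fin m → ℝ) → (Fin n → ℝ))
    (k : ℕ) (ξ : Fin n → ℝ) (u : ℕ → Fin m → ℝ) :
    cost V g (k + 1) ξ u = V ξ + cost V g k (g ξ (u 0)) (u ∘ Nat.succ) := by
  simp only [cost, sum_range_succ' _ k, iter_succ_left, add_comm (V ξ)]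
  rfl

theorem cost_mono (hpk : p ≤ k) : cost V g p ξ u ≤ cost V g k ξ u :=
  sum_le_sum_of_subset (range_mono hpk)

end Concatenation

/-- The value achieved from `ξ` by the selection `u` of control sequences; it is the optimal value
`V_N(ξ)` when `u` satisfies `IsOptSel X U g V N`. -/
def optValue {n m : ℕ} (V : (Fin n → ℝ) → ℝ≥0) (g : (Fin n → ℝ) → (Fin m → ℝ) → (Fin n → ℝ))
    (N : ℕ) (u : (Fin n → ℝ) → ℕ → Fin m → ℝ) (ξ : Fin n → ℝ) : ℝ≥0 :=
  cost V g N ξ (u ξ)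

section ClosedLoop

variable {n m : ℕ} {X : Set (Fin n → ℝ)} {U : Set (Fin m → ℝ)}
  {g : (Fin n → ℝ) → (Fin m → ℝ) → (Fin n → ℝ)} {V : (Fin n → ℝ) → ℝ≥0} {ξ : Fin n → ℝ}
  {k : ℕ}

theorem IsOptSel.optValue_le_cost_add {N p r : ℕ} {u u' : (Fin n → ℝ) → ℕ → Fin m → ℝ}
    (hu : IsOptSel X U g V N u) (hu' : IsOptSel X U g V r u') (hN : N = p + r) (hξ : ξ ∈ X)
    {v : ℕ → Fin m → ℝ} (hv : Adm X U g ξ p v) :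
    optValue V g N u ξ ≤ cost V g p ξ v + optValue V g r u' (iter g ξ v p) := by
  subst hN
  have htail := (hu' _ (hv.iter_mem hξ)).1
  exact ((hu ξ hξ).2 _ (hv.concatControl htail)).trans_eq cost_concatControl

theorem optValue_succ (V : (Fin n → ℝ) → ℝ≥0) (g : (Fin n → ℝ) → (Fin m → ℝ) → (Fin n → ℝ))
    (k : ℕ) (u : (Fin n → ℝ) → ℕ → Fin m → ℝ) (ξ : Fin n → ℝ) :
    optValue V g (k + 1) u ξ = V ξ + cost V g k (g ξ (u ξ 0)) (u ξ ∘ Nat.succ) :=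
  cost_succ_left V g k ξ (u ξ)

theorem le_optValue_succ (V : (Fin n → ℝ) → ℝ≥0)
    (g : (Fin n → ℝ) → (Fin m → ℝ) → (Fin n → ℝ)) (k : ℕ)
    (u : (Fin n → ℝ) → ℕ → Fin m → ℝ) (ξ : Fin n → ℝ) : V ξ ≤ optValue V g (k + 1) u ξ :=
  optValue_succ V g k u ξ ▸ le_self_add

theorem IsOptSel.mpcLoop_mem {u : (Fin n → ℝ) → ℕ → Fin m → ℝ}
    (hu : IsOptSel X U g V (k + 1) u) (hξ : ξ ∈ X) (t : ℕ) : mpcLoop g u ξ t ∈ X := by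
  induction t with
  | zero => exact hξ
  | succ t ih => exact ((hu _ ih).1 0 k.succ_pos).2

variable {uopt : ℕ → (Fin n → ℝ) → ℕ → Fin m → ℝ} {σ : ℝ≥0 → ℝ≥0}

theorem optValue_next_le (hopt : ∀ N, 1 ≤ N → IsOptSel X U g V N (uopt N))
    (hVN : ∀ N, 1 ≤ N → ∀ ξ ∈ X, optValue V g N (uopt N) ξ ≤ σ (V ξ)) (hξ : ξ ∈ X) {p : ℕ}
    (hp : p ≤ k) :
    optValue V g (k + 1) (uopt (k + 1)) (g ξ (uopt (k + 1) ξ 0)) ≤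
      cost V g p (g ξ (uopt (k + 1) ξ 0)) (uopt (k + 1) ξ ∘ Nat.succ) +
        σ (V (iter g (g ξ (uopt (k + 1) ξ 0)) (uopt (k + 1) ξ ∘ Nat.succ) p)) := by
  have hadm := (hopt (k + 1) k.succ_pos ξ hξ).1
  have hnext : g ξ (uopt (k + 1) ξ 0) ∈ X := (hadm 0 k.succ_pos).2
  have htail := hadm.tail.mono hp
  obtain ⟨r, hr, hk⟩ : ∃ r, 1 ≤ r ∧ k + 1 = p + r := ⟨k + 1 - p, by omega, by omega⟩
  exact ((hopt _ k.succ_pos).optValue_le_cost_add (hopt r hr) hk hnext htail).trans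
    (add_le_add_right (hVN r hr _ (htail.iter_mem hnext)) _)

theorem optValue_next_add_le (hopt : ∀ N, 1 ≤ N → IsOptSel X U g V N (uopt N))
    (hσ : Monotone σ) (hVN : ∀ N, 1 ≤ N → ∀ ξ ∈ X, optValue V g N (uopt N) ξ ≤ σ (V ξ))
    {c ε L : ℝ≥0} (hc : σ c ≤ ε) (hk : 0 < k) (hLk : L ≤ k * c) (hξ : ξ ∈ X)
    (hL : optValue V g (k + 1) (uopt (k + 1)) ξ ≤ L) :
    optValue V g (k + 1) (uopt (k + 1)) (g ξ (uopt (k + 1) ξ 0)) + V ξ ≤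
      optValue V g (k + 1) (uopt (k + 1)) ξ + ε := by
  have htail : cost V g k (g ξ (uopt (k + 1) ξ 0)) (uopt (k + 1) ξ ∘ Nat.succ) ≤ k * c :=
    (le_add_self.trans_eq (optValue_succ V g k (uopt (k + 1)) ξ).symm).trans (hL.trans hLk)
  obtain ⟨p, hp, hVp⟩ : ∃ p ∈ range k,
      V (iter g (g ξ (uopt (k + 1) ξ 0)) (uopt (k + 1) ξ ∘ Nat.succ) p) ≤ c := by
    refine exists_le_of_sum_le (nonempty_range_iff.2 hk.ne') (htail.trans_eq ?_)
    rw [sum_const, card_range, nsmul_eq_mul]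
  have hpk : p ≤ k := (mem_range.1 hp).le
  calc _ ≤ cost V g p (g ξ (uopt (k + 1) ξ 0)) (uopt (k + 1) ξ ∘ Nat.succ) + σ c + V ξ := by
        grw [optValue_next_le hopt hVN hξ hpk, hσ hVp]
    _ ≤ cost V g k (g ξ (uopt (k + 1) ξ 0)) (uopt (k + 1) ξ ∘ Nat.succ) + ε + V ξ := by
        grw [cost_mono hpk, hc]
    _ = optValue V g (k + 1) (uopt (k + 1)) ξ + ε := by
        rw [optValue_succ]
        ring

theorem exists_horizon_optValue_mpcLoop_le (hopt : ∀ N, 1 ≤ N → IsOptSel X U g V N (uopt N))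
    (hσ : ClassK σ) (hVN : ∀ N, 1 ≤ N → ∀ ξ ∈ X, optValue V g N (uopt N) ξ ≤ σ (V ξ))
    (L : ℝ≥0) {η : ℝ≥0} (hη : 0 < η) :
    ∃ K : ℕ, ∀ k ≥ K, ∀ ξ ∈ X, optValue V g (k + 1) (uopt (k + 1)) ξ ≤ L → ∀ t : ℕ,
      optValue V g (k + 1) (uopt (k + 1)) (mpcLoop g (uopt (k + 1)) ξ t) ≤
        max (σ (2 * optValue V g (k + 1) (uopt (k + 1)) ξ / (t + 1))) η := by
  obtain ⟨ε, hε, hεη⟩ : ∃ ε, 0 < ε ∧ σ (2 * ε) + ε ≤ η := by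
    obtain ⟨c, hc, hcη⟩ := hσ.exists_pos_le (half_pos hη)
    refine ⟨min (c / 2) (η / 2), lt_min (half_pos hc) (half_pos hη), ?_⟩
    calc _ ≤ σ (2 * (c / 2)) + η / 2 :=
          add_le_add (hσ.2.1.monotone (mul_le_mul_right (min_le_left _ _) 2)) (min_le_right _ _)
      _ ≤ η / 2 + η / 2 := by grw [mul_div_cancel₀ c two_ne_zero, hcη]
      _ = η := add_halves η
  obtain ⟨c, hc, hcε⟩ := hσ.exists_pos_le hε
  obtain ⟨K, hK⟩ := exists_nat_ge (max L η / c)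
  refine ⟨K + 1, fun k hk ξ hξ hL t => ?_⟩
  have hLk : max L η ≤ k * c :=
    (div_le_iff₀ hc).1 (hK.trans (Nat.cast_le.2 (Nat.le_of_succ_le hk)))
  have hmem := (hopt (k + 1) k.succ_pos).mpcLoop_mem hξ
  refine (le_max_of_practical_decrease hσ.2.1.monotone (hεη.trans (le_max_right L η))
    (W := fun t => optValue V g (k + 1) (uopt (k + 1)) (mpcLoop g (uopt (k + 1)) ξ t))
    (v := fun t => V (mpcLoop g (uopt (k + 1)) ξ t)) (hL.trans (le_max_left L η))
    (fun t => le_optValue_succ V g k _ _) (fun t => hVN _ k.succ_pos _ (hmem t))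
    (fun t ht => ?_) t).trans (max_le_max_left _ hεη)
  exact optValue_next_add_le hopt hσ.2.1.monotone hVN hcε (K.succ_pos.trans_le hk) hLk
    (hmem t) ht

theorem exists_optValue_next_le_mul (hopt : ∀ N, 1 ≤ N → IsOptSel X U g V N (uopt N))
    {γ : ℝ≥0} (hγ : 1 < γ)
    (hVN : ∀ N, 1 ≤ N → ∀ ξ ∈ X, optValue V g N (uopt N) ξ ≤ γ * V ξ)
    (hk : (1 - (γ : ℝ)⁻¹) ^ k < (γ : ℝ)⁻¹) :
    ∃ θ : ℝ≥0, 0 < θ ∧ θ < 1 ∧ ∀ ξ ∈ X,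
      optValue V g (k + 1) (uopt (k + 1)) (g ξ (uopt (k + 1) ξ 0)) ≤
        θ * optValue V g (k + 1) (uopt (k + 1)) ξ := by
  have hγ' : (1 : ℝ) < γ := hγ
  have hρ : 0 < 1 - (γ : ℝ)⁻¹ := sub_pos.2 (inv_lt_one_of_one_lt₀ hγ')
  have hpow : (1 - (γ : ℝ)⁻¹) ^ k < 1 := hk.trans (inv_lt_one_of_one_lt₀ hγ')
  have hθ0 : 0 < (1 - (γ : ℝ)⁻¹) / (1 - (1 - (γ : ℝ)⁻¹) ^ k) := div_pos hρ (sub_pos.2 hpow)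
  have hθ1 : (1 - (γ : ℝ)⁻¹) / (1 - (1 - (γ : ℝ)⁻¹) ^ k) < 1 :=
    (div_lt_one (sub_pos.2 hpow)).2 (sub_lt_sub_left hk 1)
  obtain ⟨θ, hθ⟩ : ∃ θ : ℝ≥0, (θ : ℝ) = (1 - (γ : ℝ)⁻¹) / (1 - (1 - (γ : ℝ)⁻¹) ^ k) :=
    ⟨⟨_, hθ0.le⟩, rfl⟩
  refine ⟨θ, NNReal.coe_pos.1 (hθ ▸ hθ0), NNReal.coe_lt_one.1 (hθ ▸ hθ1), fun ξ hξ => ?_⟩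
  have hbound := hVN (k + 1) k.succ_pos ξ hξ
  rw [optValue_succ V g k (uopt (k + 1)) ξ] at hbound ⊢
  have hstep := fun p (hp : p < k) => optValue_next_le hopt hVN hξ hp.le
  simp only [← NNReal.coe_le_coe, cost, NNReal.coe_add, NNReal.coe_mul, NNReal.coe_sum]
    at hbound hstep ⊢
  rw [hθ]
  exact le_div_mul_of_forall_le_sum_add hγ'.le hpow hstep hbound

theorem optValue_mpcLoop_le_mul_pow {u : (Fin n → ℝ) → ℕ → Fin m → ℝ}
    (hu : IsOptSel X U g V (k + 1) u) {θ : ℝ≥0}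
    (hθ : ∀ ξ ∈ X, optValue V g (k + 1) u (g ξ (u ξ 0)) ≤ θ * optValue V g (k + 1) u ξ)
    (hξ : ξ ∈ X) (t : ℕ) :
    optValue V g (k + 1) u (mpcLoop g u ξ t) ≤ optValue V g (k + 1) u ξ * θ ^ t := by
  induction t with
  | zero => simp [mpcLoop]
  | succ t ih =>
    calc _ ≤ θ * optValue V g (k + 1) u (mpcLoop g u ξ t) := hθ _ (hu.mpcLoop_mem hξ t)
      _ ≤ θ * (optValue V g (k + 1) u ξ * θ ^ t) := by gcongr
      _ = _ := by ring

end ClosedLoop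

section Stability

variable {n m : ℕ} {X : Set (Fin n → ℝ)} {U : Set (Fin m → ℝ)}
  {g : (Fin n → ℝ) → (Fin m → ℝ) → (Fin n → ℝ)} {ω V : (Fin n → ℝ) → ℝ≥0}
  {ulα olα : ℝ≥0 → ℝ≥0} {uopt : ℕ → (Fin n → ℝ) → ℕ → Fin m → ℝ}

theorem exists_classKL_mpcLoop_le_max (hulα : ClassKInf ulα) (holα : ClassK olα)
    (hsandwich : ∀ ξ ∈ X, ulα (ω ξ) ≤ V ξ ∧ V ξ ≤ olα (ω ξ))
    (hopt : ∀ N, 1 ≤ N → IsOptSel X U g V N (uopt N)) {σ : ℝ≥0 → ℝ≥0} (hσ : ClassK σ)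
    (hVN : ∀ N, 1 ≤ N → ∀ ξ ∈ X, optValue V g N (uopt N) ξ ≤ σ (V ξ)) :
    ∃ β : ℝ≥0 → ℝ≥0 → ℝ≥0, ClassKL β ∧
      ∀ δ : ℝ≥0, 0 < δ → ∀ Δ : ℝ≥0, ∃ N₀ : ℕ, 1 ≤ N₀ ∧
        ∀ N : ℕ, N₀ ≤ N → ∀ ξ ∈ X, ω ξ < Δ →
          ∀ t : ℕ, ω (mpcLoop g (uopt N) ξ t) ≤ max (β (ω ξ) (t : ℝ≥0)) δ := by
  obtain ⟨a, rfl⟩ := hulα.exists_orderIso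
  refine ⟨fun r s => a.symm (σ (2 * σ (olα r) * (s + 1)⁻¹)),
    ((classK_orderIso a.symm).comp hσ).classKL_comp_mul_inv_add_one
      ((hσ.comp holα).const_mul two_pos), fun δ hδ Δ => ?_⟩
  obtain ⟨K, hK⟩ :=
    exists_horizon_optValue_mpcLoop_le hopt hσ hVN (σ (olα Δ)) (hulα.1.pos hδ)
  refine ⟨K + 1, K.succ_pos, fun N hN ξ hξ hξΔ t => ?_⟩
  obtain ⟨k, rfl⟩ := Nat.exists_eq_add_of_le' (K.succ_pos.trans_le hN)
  have hinit : optValue V g (k + 1) (uopt (k + 1)) ξ ≤ σ (olα (ω ξ)) :=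
    (hVN _ k.succ_pos ξ hξ).trans (hσ.2.1.monotone (hsandwich ξ hξ).2)
  have hinitΔ := hinit.trans (hσ.2.1.monotone (holα.2.1.monotone hξΔ.le))
  have hmem := (hopt (k + 1) k.succ_pos).mpcLoop_mem hξ t
  rw [← a.symm_apply_apply δ, ← a.symm.monotone.map_max, a.le_symm_apply]
  calc a (ω (mpcLoop g (uopt (k + 1)) ξ t)) ≤ V (mpcLoop g (uopt (k + 1)) ξ t) :=
        (hsandwich _ hmem).1
    _ ≤ optValue V g (k + 1) (uopt (k + 1)) (mpcLoop g (uopt (k + 1)) ξ t) :=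
        le_optValue_succ V g k _ _
    _ ≤ max (σ (2 * optValue V g (k + 1) (uopt (k + 1)) ξ / (t + 1))) (a δ) :=
        hK k (Nat.le_of_succ_le_succ hN) ξ hξ hinitΔ t
    _ ≤ max (σ (2 * σ (olα (ω ξ)) * ((t : ℝ≥0) + 1)⁻¹)) (a δ) := by
        rw [div_eq_mul_inv]
        exact max_le_max_right _ (hσ.2.1.monotone (by gcongr))

theorem exists_classKL_mpcLoop_le (hulα : ClassKInf ulα) (holα : ClassK olα)
    (hsandwich : ∀ ξ ∈ X, ulα (ω ξ) ≤ V ξ ∧ V ξ ≤ olα (ω ξ))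
    (hopt : ∀ N, 1 ≤ N → IsOptSel X U g V N (uopt N)) {γ : ℝ≥0} (hγ : 1 < γ)
    (hVN : ∀ N, 1 ≤ N → ∀ ξ ∈ X, optValue V g N (uopt N) ξ ≤ γ * V ξ) {N : ℕ} (hN : 1 ≤ N)
    (hNγ : (N : ℝ) > 2 + Real.log (γ - 1) / (Real.log γ - Real.log (γ - 1))) :
    ∃ β : ℝ≥0 → ℝ≥0 → ℝ≥0, ClassKL β ∧
      ∀ ξ ∈ X, ∀ t : ℕ, ω (mpcLoop g (uopt N) ξ t) ≤ β (ω ξ) (t : ℝ≥0) := by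
  obtain ⟨a, rfl⟩ := hulα.exists_orderIso
  obtain ⟨k, rfl⟩ := Nat.exists_eq_add_of_le' hN
  obtain ⟨θ, hθ0, hθ1, hθ⟩ := exists_optValue_next_le_mul hopt hγ hVN
    (one_sub_inv_pow_lt_inv hγ (by exact_mod_cast hNγ))
  refine ⟨fun r s => a.symm (γ * olα r * θ ^ (s : ℝ)),
    (classK_orderIso a.symm).classKL_comp_mul_rpow (holα.const_mul (one_pos.trans hγ)) hθ0 hθ1,
    fun ξ hξ t => ?_⟩
  have hoptk := hopt (k + 1) k.succ_pos
  rw [a.le_symm_apply, NNReal.coe_natCast, NNReal.rpow_natCast]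
  calc a (ω (mpcLoop g (uopt (k + 1)) ξ t)) ≤ V (mpcLoop g (uopt (k + 1)) ξ t) :=
        (hsandwich _ (hoptk.mpcLoop_mem hξ t)).1
    _ ≤ optValue V g (k + 1) (uopt (k + 1)) (mpcLoop g (uopt (k + 1)) ξ t) :=
        le_optValue_succ V g k _ _
    _ ≤ optValue V g (k + 1) (uopt (k + 1)) ξ * θ ^ t :=
        optValue_mpcLoop_le_mul_pow hoptk hθ hξ t
    _ ≤ γ * olα (ω ξ) * θ ^ t := by
        gcongr
        exact (hVN _ k.succ_pos ξ hξ).trans (mul_le_mul_right (hsandwich ξ hξ).2 γ)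

theorem mpc_value_bound_stabilizes_general (hulα : ClassKInf ulα) (holα : ClassK olα)
    (hsandwich : ∀ ξ ∈ X, ulα (ω ξ) ≤ V ξ ∧ V ξ ≤ olα (ω ξ))
    (hopt : ∀ N, 1 ≤ N → IsOptSel X U g V N (uopt N)) {σ : ℝ≥0 → ℝ≥0} (hσ : ClassK σ)
    (hVN : ∀ N, 1 ≤ N → ∀ ξ ∈ X, optValue V g N (uopt N) ξ ≤ σ (V ξ)) :
    (∃ β : ℝ≥0 → ℝ≥0 → ℝ≥0, ClassKL β ∧
      ∀ δ : ℝ≥0, 0 < δ → ∀ Δ : ℝ≥0, ∃ N₀ : ℕ, 1 ≤ N₀ ∧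
        ∀ N : ℕ, N₀ ≤ N → ∀ ξ ∈ X, ω ξ < Δ →
          ∀ t : ℕ, ω (mpcLoop g (uopt N) ξ t) ≤ max (β (ω ξ) (t : ℝ≥0)) δ) ∧
    (∀ γ : ℝ≥0, 1 < γ → (∀ r : ℝ≥0, σ r = γ * r) →
      ∀ N : ℕ, 1 ≤ N →
        (N : ℝ) > 2 + Real.log (γ - 1) / (Real.log γ - Real.log (γ - 1)) →
        ∃ β : ℝ≥0 → ℝ≥0 → ℝ≥0, ClassKL β ∧
          ∀ ξ ∈ X, ∀ t : ℕ, ω (mpcLoop g (uopt N) ξ t) ≤ β (ω ξ) (t : ℝ≥0)) :=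
  ⟨exists_classKL_mpcLoop_le_max hulα holα hsandwich hopt hσ hVN, fun _ hγ hσγ _ hN hNγ =>
    exists_classKL_mpcLoop_le hulα holα hsandwich hopt hγ
      (fun N hN ξ hξ => (hVN N hN ξ hξ).trans_eq (hσγ _)) hN hNγ⟩

end Stability

/-- (Proposition: if the optimal value functions `V_N` are uniformly bounded
by `σ(V)` for a class-K∞ function `σ`, the classic MPC scheme is semiglobally practically
asymptotically ω-stabilizing; if `σ` is linear, `σ(r) = γr`, the MPC closed loop is
asymptotically ω-stable for all `N > 2 + ln(γ-1)/(ln γ - ln(γ-1))`). -/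
theorem mpc_value_bound_stabilizes {n m : ℕ}
    (X : Set (Fin n → ℝ)) (U : Set (Fin m → ℝ))
    (g : (Fin n → ℝ) → (Fin m → ℝ) → (Fin n → ℝ))
    (hg : ContinuousOn (fun p : (Fin n → ℝ) × (Fin m → ℝ) => g p.1 p.2) (X ×ˢ U))
    (ω : (Fin n → ℝ) → ℝ≥0) (hω : Continuous ω) (hωzero : ∃ x, ω x = 0)
    (M : ℕ) (hM : 1 ≤ M)
    (V : (Fin n → ℝ) → ℝ≥0) (hV : Continuous V)
    (ulα olα : ℝ≥0 → ℝ≥0) (hulα : ClassKInf ulα) (holα : ClassKInf olα)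
    (hsandwich : ∀ ξ, ulα (ω ξ) ≤ V ξ ∧ V ξ ≤ olα (ω ξ))
    (q : (Fin n → ℝ) → ℕ → Fin m → ℝ) (hq : IsAfcl ω X U g M q)
    (α : ℝ≥0 → ℝ≥0) (hα : ClassKInf α) (hαlt : ∀ s : ℝ≥0, 0 < s → α s < s)
    (hdecay : ∀ ξ ∈ X, V (iter g ξ (q ξ) M) ≤ α (V ξ))
    -- a selection of optimal control sequences for every horizon `N ∈ ℕ*`
    (uopt : ℕ → (Fin n → ℝ) → ℕ → Fin m → ℝ)
    (hopt : ∀ N : ℕ, 1 ≤ N → IsOptSel X U g V N (uopt N))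
    -- the value function bound `V_N(ξ) ≤ σ(V(ξ))`
    (σ : ℝ≥0 → ℝ≥0) (hσ : ClassKInf σ)
    (hVN : ∀ N : ℕ, 1 ≤ N → ∀ ξ ∈ X, cost V g N ξ (uopt N ξ) ≤ σ (V ξ)) :
    -- semiglobal practical asymptotic ω-stabilization w.r.t. the horizon `N`
    (∃ β : ℝ≥0 → ℝ≥0 → ℝ≥0, ClassKL β ∧
      ∀ δ : ℝ≥0, 0 < δ → ∀ Δ : ℝ≥0, δ < Δ → ∃ N₀ : ℕ, 1 ≤ N₀ ∧
        ∀ N : ℕ, N₀ ≤ N → ∀ ξ ∈ X, ω ξ < Δ →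
          ∀ t : ℕ, ω (mpcLoop g (uopt N) ξ t) ≤ max (β (ω ξ) (t : ℝ≥0)) δ) ∧
    -- and, if `σ` is linear, asymptotic ω-stability for every
    -- `N > 2 + ln(γ-1)/(ln γ - ln(γ-1))`
    (∀ γ : ℝ≥0, 1 < γ → (∀ r : ℝ≥0, σ r = γ * r) →
      ∀ N : ℕ, 1 ≤ N →
        (N : ℝ) > 2 + Real.log ((γ : ℝ) - 1) / (Real.log (γ : ℝ) - Real.log ((γ : ℝ) - 1)) →
        ∃ β : ℝ≥0 → ℝ≥0 → ℝ≥0, ClassKL β ∧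
          ∀ ξ ∈ X, ∀ t : ℕ, ω (mpcLoop g (uopt N) ξ t) ≤ β (ω ξ) (t : ℝ≥0)) :=
  (mpc_value_bound_stabilizes_general hulα holα.1 (fun ξ _ => hsandwich ξ) hopt hσ.1 hVN).imp_left
    fun ⟨β, hβ, h⟩ => ⟨β, hβ, fun δ hδ Δ _ => h δ hδ Δ⟩
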